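/- Let G be a finite group with all characters rational-valued, and let H, K be subgroups of G. Then Σ_{j=1}^{N} (dim ρ_j^H)(dim ρ_j^K) = (1/(|H||K|)) · Σ over pairs (h, k) ∈ H × K with h conjugate to k of |G|/c(h), where c(h) is the size of the conjugacy class of h, N is the number of irreducible representations, and ρ_j^H is the H-fixed subspace of ρ_j. -/

import Mathlib

open scoped Classical

lemma op_eq_zero {G V : Type} [Group G] [Fintype G] [AddCommGroup V] [Module ℂ V]
    [FiniteDimensional ℂ V] (σ : Representation ℂ G V) [σ.IsIrreducible] (f : G → ℂ)
    (hf : ∀ x y, f (y * x * y⁻¹) = f x)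
    (h0 : ∑ x, f x * σ.character x⁻¹ = 0) : ∑ x, f x • σ x⁻¹ = 0 := by
  set T : V →ₗ[ℂ] V := ∑ x, f x • σ x⁻¹ with hT
  have hcomm : ∀ g, T ∘ₗ σ g = σ g ∘ₗ T := by
    intro g
    change T * σ g = σ g * T
    rw [hT, Finset.sum_mul, Finset.mul_sum]
    refine Fintype.sum_equiv (MulAut.conj g⁻¹).toEquiv _ _ fun x => ?_
    simp only [MulEquiv.toEquiv_eq_coe, EquivLike.coe_coe, MulAut.conj_apply, hf, smul_mul_assoc,
      mul_smul_comm, ← map_mul]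
    congr 2
    group
  let φ : Representation.IntertwiningMap σ σ := ⟨T, hcomm⟩
  obtain ⟨c, hc⟩ :=
    (Representation.IsIrreducible.algebraMap_intertwiningMap_bijective_of_isAlgClosed
      (ρ := σ)).2 φ
  have hTc : T = c • LinearMap.id := by
    have := congrArg (fun ψ : Representation.IntertwiningMap σ σ => ψ.toLinearMap) hc
    exact this.symm
  have htr : LinearMap.trace ℂ V T = 0 := by
    rw [← h0, hT]; simp [Representation.character]
  have hnt : Nontrivial V := by
    have : IsSimpleModule (MonoidAlgebra ℂ G) σ.asModule := inferInstance
    exact IsSimpleModule.nontrivial (MonoidAlgebra ℂ G) σ.asModule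
  rw [hTc] at htr ⊢
  have hd : (Module.finrank ℂ V : ℂ) ≠ 0 := by
    exact_mod_cast Module.finrank_pos.ne'
  simp [LinearMap.trace_id, hd] at htr
  simp [htr]

lemma simple_of {G V : Type} [Group G] [Fintype G] [AddCommGroup V] [Module ℂ V]
    [FiniteDimensional ℂ V] (σ : Representation ℂ G V) [σ.IsIrreducible] :
    CategoryTheory.Simple (FDRep.of σ) := by
  rw [FDRep.simple_iff_char_is_norm_one]
  have hn : (Nat.card G : ℂ) ≠ 0 := by exact_mod_cast Nat.card_pos.ne'
  have : Invertible (Nat.card G : ℂ) := invertibleOfNonzero hn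
  have h := Representation.char_orthonormal σ σ
  rw [if_pos ⟨Representation.Equiv.refl σ⟩] at h
  change ∑ g : G, σ.character g * σ.character g⁻¹ = _
  field_simp at h
  simpa using h

lemma smul_eq_zero_aux {G : Type} [Group G] [Fintype G]
    {ι : Type} [Fintype ι] (ρ : ι → FDRep ℂ G)
    (hcomplete : ∀ V : FDRep ℂ G, CategoryTheory.Simple V → ∃ i, Nonempty (ρ i ≅ V))
    (f : G → ℂ) (hf : ∀ x y, f (y * x * y⁻¹) = f x)
    (h0 : ∀ i, ∑ x, f x * (ρ i).character x⁻¹ = 0)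
    (M : Type) [AddCommGroup M] [Module (MonoidAlgebra ℂ G) M]
    [IsSimpleModule (MonoidAlgebra ℂ G) M] (v : M) :
    (∑ x, MonoidAlgebra.single x⁻¹ (f x) : MonoidAlgebra ℂ G) • v = 0 := by
  set a : MonoidAlgebra ℂ G := ∑ x, MonoidAlgebra.single x⁻¹ (f x) with ha
  have hsimp : IsSimpleModule (MonoidAlgebra ℂ G) M := inferInstance
  let _ : Module ℂ M := Module.compHom M (algebraMap ℂ (MonoidAlgebra ℂ G))
  have : IsScalarTower ℂ (MonoidAlgebra ℂ G) M := ⟨fun c x w => by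
    rw [Algebra.smul_def, mul_smul]; rfl⟩
  have : FiniteDimensional ℂ M := Module.Finite.trans (MonoidAlgebra ℂ G) _
  let σ : Representation ℂ G M := Representation.ofModule' M
  have hσ : ∀ r : MonoidAlgebra ℂ G, ∀ w : M, σ.asAlgebraHom r w = r • w := by
    intro r w
    have : σ.asAlgebraHom = Algebra.lsmul ℂ ℂ M :=
      (MonoidAlgebra.lift ℂ (M →ₗ[ℂ] M) G).apply_symm_apply _
    rw [this]; rfl
  let e : σ.asModule ≃ₗ[MonoidAlgebra ℂ G] M :=
    { σ.asModuleEquiv.toAddEquiv with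
      map_smul' := fun r w => hσ r (σ.asModuleEquiv w) }
  have hirr : σ.IsIrreducible := by
    rw [Representation.irreducible_iff_isSimpleModule_asModule]
    exact IsSimpleModule.congr e
  obtain ⟨i, ⟨e⟩⟩ := hcomplete _ (simple_of σ)
  have hz := op_eq_zero σ f hf (by
    have := h0 i
    rw [FDRep.char_iso e] at this
    exact this)
  have h1 : σ.asAlgebraHom a = 0 := by
    rw [← hz]; simp [a, Representation.asAlgebraHom_single]
  rw [← hσ, h1]; rfl

lemma class_eq_zero {G : Type} [Group G] [Fintype G]
    {ι : Type} [Fintype ι] (ρ : ι → FDRep ℂ G)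
    (hcomplete : ∀ V : FDRep ℂ G, CategoryTheory.Simple V → ∃ i, Nonempty (ρ i ≅ V))
    (f : G → ℂ) (hf : ∀ x y, f (y * x * y⁻¹) = f x)
    (h0 : ∀ i, ∑ x, f x * (ρ i).character x⁻¹ = 0) : f = 0 := by
  let a : MonoidAlgebra ℂ G := ∑ x, MonoidAlgebra.single x⁻¹ (f x)
  have ha : a ∈ Ring.jacobson (MonoidAlgebra ℂ G) := by
    rw [Ring.jacobson, Module.jacobson, Submodule.mem_sInf]
    intro m hm
    have : IsSimpleModule (MonoidAlgebra ℂ G) (MonoidAlgebra ℂ G ⧸ m) :=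
      isSimpleModule_iff_isCoatom.2 hm
    have h3 := smul_eq_zero_aux ρ hcomplete f hf h0 (MonoidAlgebra ℂ G ⧸ m) (Submodule.Quotient.mk 1)
    rw [← Submodule.Quotient.mk_smul, Submodule.Quotient.mk_eq_zero] at h3
    simpa using h3
  rw [IsSemisimpleRing.jacobson_eq_bot] at ha
  have ha0 : a = 0 := by simpa using ha
  funext g
  have := congrArg (fun b : MonoidAlgebra ℂ G => b.coeff g⁻¹) ha0
  simpa only [a, MonoidAlgebra.coeff_sum, MonoidAlgebra.coeff_single, Finsupp.finsetSum_apply,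
    Finsupp.single_apply, inv_inj, Finset.sum_ite_eq', Finset.mem_univ, if_true,
    MonoidAlgebra.coeff_zero, Finsupp.zero_apply, Pi.zero_apply] using this

lemma second_orth {G : Type} [Group G] [Fintype G]
    {ι : Type} [Fintype ι] (ρ : ι → FDRep ℂ G)
    (hirr : ∀ i, CategoryTheory.Simple (ρ i))
    (hdist : ∀ i j, Nonempty (ρ i ≅ ρ j) → i = j)
    (hcomplete : ∀ V : FDRep ℂ G, CategoryTheory.Simple V → ∃ i, Nonempty (ρ i ≅ V))
    (g h : G) : ∑ i, (ρ i).character g⁻¹ * (ρ i).character h =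
      if IsConj g h then (Fintype.card G : ℂ) / (Nat.card {b : G // IsConj g b} : ℂ) else 0 := by
  have hn : (Nat.card G : ℂ) ≠ 0 := by exact_mod_cast Nat.card_pos.ne'
  have : Invertible (Nat.card G : ℂ) := invertibleOfNonzero hn
  have hconj : ∀ (V : FDRep ℂ G) {x y : G}, IsConj x y → V.character x = V.character y := by
    intro V x y hxy
    obtain ⟨c, rfl⟩ := isConj_iff.1 hxy
    simp
  have hinv : ∀ {x y : G}, IsConj x y → IsConj x⁻¹ y⁻¹ := by
    intro x y hxy
    obtain ⟨c, rfl⟩ := isConj_iff.1 hxy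
    exact isConj_iff.2 ⟨c, by group⟩
  set N := Nat.card {b : G // IsConj g b} with hN
  have hN0 : (N : ℂ) ≠ 0 := by
    have : Nonempty {b : G // IsConj g b} := ⟨⟨g, IsConj.refl g⟩⟩
    exact_mod_cast Nat.card_pos.ne'
  let F : G → ℂ := fun x => (if IsConj g x then (1:ℂ) else 0)
    - (N : ℂ) * (Nat.card G : ℂ)⁻¹ * ∑ i, (ρ i).character g⁻¹ * (ρ i).character x
  have hF : F = 0 := by
    apply class_eq_zero ρ hcomplete
    · intro x y
      have hxy : IsConj x (y * x * y⁻¹) := isConj_iff.2 ⟨y, rfl⟩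
      have : IsConj g (y * x * y⁻¹) ↔ IsConj g x := ⟨fun h => h.trans hxy.symm, fun h => h.trans hxy⟩
      simp only [F, this, FDRep.char_conj]
    · intro j
      have horth : ∀ i, (Nat.card G : ℂ)⁻¹ * ∑ x : G, (ρ i).character x * (ρ j).character x⁻¹ = if i = j then 1 else 0 := by
        intro i
        have := hirr i
        have := hirr j
        rw [FDRep.char_orthonormal]
        have : Nonempty (ρ i ≅ ρ j) ↔ i = j := ⟨hdist i j, fun h => by subst h; exact ⟨CategoryTheory.Iso.refl _⟩⟩
        simp [this]
      simp only [F, sub_mul, Finset.sum_sub_distrib]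
      have e1 : ∑ x, (if IsConj g x then (1:ℂ) else 0) * (ρ j).character x⁻¹ = N * (ρ j).character g⁻¹ := by
        have : ∀ x, (if IsConj g x then (1:ℂ) else 0) * (ρ j).character x⁻¹ = if IsConj g x then (ρ j).character g⁻¹ else 0 := by
          intro x
          split_ifs with hx
          · rw [one_mul, hconj _ (hinv hx)]
          · simp
        simp_rw [this]
        rw [← Finset.sum_filter, Finset.sum_const, nsmul_eq_mul, hN, Nat.card_eq_fintype_card,
          Fintype.card_subtype]
      have e2 : ∑ x, (N : ℂ) * (Nat.card G : ℂ)⁻¹ * (∑ i, (ρ i).character g⁻¹ * (ρ i).character x) * (ρ j).character x⁻¹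
          = N * ∑ i, (ρ i).character g⁻¹ * ((Nat.card G : ℂ)⁻¹ * ∑ x : G, (ρ i).character x * (ρ j).character x⁻¹) := by
        simp only [Finset.mul_sum, Finset.sum_mul]
        rw [Finset.sum_comm]
        refine Finset.sum_congr rfl fun i _ => Finset.sum_congr rfl fun x _ => ?_
        ring
      rw [e1, e2]
      simp only [horth]
      simp
  have := congrFun hF h
  simp only [F, Pi.zero_apply] at this
  rw [sub_eq_zero] at this
  rw [← Nat.card_eq_fintype_card]
  have e : (∑ i, (ρ i).character g⁻¹ * (ρ i).character h) = (Nat.card G : ℂ) / N * (if IsConj g h then (1:ℂ) else 0) := by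
    rw [this]; field_simp
  rw [e]; split_ifs <;> simp

lemma finrank_inv {G : Type} [Group G] [Fintype G] (V : FDRep ℂ G) (H : Subgroup G) :
    (Module.finrank ℂ (Representation.invariants (V.ρ.comp H.subtype)) : ℂ)
      = (Nat.card H : ℂ)⁻¹ * ∑ h : H, V.character h := by
  have hn : (Nat.card H : ℂ) ≠ 0 := by exact_mod_cast Nat.card_pos.ne'
  have : Invertible (Nat.card H : ℂ) := invertibleOfNonzero hn
  rw [← Representation.card_inv_mul_sum_char_eq_finrank]
  rfl

theorem sum_finrank_invariants_mul_eq_conjugate_pair_sum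
    {G : Type} [Group G] [Fintype G]
    {ι : Type} [Fintype ι] (ρ : ι → FDRep ℂ G)
    (hirr : ∀ i, CategoryTheory.Simple (ρ i))
    (hdist : ∀ i j, Nonempty (ρ i ≅ ρ j) → i = j)
    (hcomplete : ∀ V : FDRep ℂ G, CategoryTheory.Simple V → ∃ i, Nonempty (ρ i ≅ V))
    (hrat : ∀ (V : FDRep ℂ G) (g : G), ∃ q : ℚ, V.character g = (q : ℂ))
    (H K : Subgroup G) :
    ∑ i, (Module.finrank ℂ
          (Representation.invariants ((ρ i).ρ.comp H.subtype)) : ℚ)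
        * (Module.finrank ℂ
          (Representation.invariants ((ρ i).ρ.comp K.subtype)) : ℚ)
      = ((Nat.card H : ℚ) * (Nat.card K : ℚ))⁻¹ *
          ∑ h : H, ∑ k : K,
            if IsConj (h : G) (k : G) then
              (Fintype.card G : ℚ) / (Nat.card {b : G // IsConj (h : G) b} : ℚ)
            else 0 := by
  have hinj : Function.Injective ((↑) : ℚ → ℂ) := Rat.cast_injective
  apply hinj
  push_cast [apply_ite ((↑) : ℚ → ℂ)]
  simp_rw [← second_orth ρ hirr hdist hcomplete, finrank_inv]
  have hH : ∀ i, ∑ h : H, (ρ i).character (h : G) = ∑ h : H, (ρ i).character (h : G)⁻¹ := fun i =>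
    Fintype.sum_equiv (Equiv.inv H) _ _ fun x => by simp
  simp_rw [hH]
  have : ∑ h : H, ∑ k : K, ∑ i, (ρ i).character (h : G)⁻¹ * (ρ i).character (k : G)
      = ∑ i, (∑ h : H, (ρ i).character (h : G)⁻¹) * ∑ k : K, (ρ i).character (k : G) := by
    simp_rw [Finset.sum_mul_sum]
    rw [Finset.sum_comm' (t' := Finset.univ) (s' := fun _ => Finset.univ) (by simp)]
    rw [Finset.sum_comm]
    conv_rhs => rw [Finset.sum_comm]
    refine Finset.sum_congr rfl fun h _ => ?_
    rw [Finset.sum_comm]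
  rw [this, Finset.mul_sum]
  refine Finset.sum_congr rfl fun i _ => ?_
  rw [mul_inv]; ring
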